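/- Let Y and Z be independent random variables with discrete distributions taking values in sets A and B respectively, and let E ⊆ A × B be an event depending on the outcomes of Y and Z. Set μ = sup over y of P(Y = y) and λ = sup over pairs y ≠ y' in A of P((y, Z) ∈ E and (y', Z) ∈ E). Then P((Y, Z) ∈ E) ≤ λ^{1/2} + 2μ. -/

import Mathlib

open scoped ENNReal

theorem aux_two_mul (a b : ℝ≥0∞) : 2 * (a * b) ≤ a * a + b * b := by
  by_cases ha : a = ⊤
  · subst ha; simp
  by_cases hb : b = ⊤
  · subst hb; simp
  lift a to NNReal using ha
  lift b to NNReal using hb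
  norm_cast
  rw [← NNReal.coe_le_coe]
  push_cast
  nlinarith [sq_nonneg ((a : ℝ) - b)]

theorem aux_cs {B : Type*} (w f : B → ℝ≥0∞) (hw : ∑' z, w z = 1) (p : ℝ≥0∞)
    (hp : p = ∑' z, w z * f z) (hp1 : p ≠ ⊤) : p * p ≤ ∑' z, w z * (f z * f z) := by
  have h : 2 * (p * p) ≤ p * p + ∑' z, w z * (f z * f z) := by
    calc 2 * (p * p) = ∑' z, w z * (2 * (p * f z)) := by
          conv_lhs => rw [mul_comm p p]; arg 2; arg 2; rw [hp]
          rw [← mul_assoc, ← ENNReal.tsum_mul_left]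
          congr 1; ext z; ring
      _ ≤ ∑' z, (w z * (p * p) + w z * (f z * f z)) := by
          refine ENNReal.tsum_le_tsum fun z => ?_
          rw [← mul_add]
          gcongr
          exact aux_two_mul _ _
      _ = _ := by rw [ENNReal.tsum_add, ENNReal.tsum_mul_right, hw, one_mul]
  rw [two_mul] at h
  exact (ENNReal.add_le_add_iff_left (ENNReal.mul_ne_top hp1 hp1)).1 h

theorem aux_final (p l m : ℝ≥0∞) (hp1 : p ≠ ⊤) (h : p * p ≤ l + m * p) :
    p ≤ l ^ ((1 : ℝ) / 2) + 2 * m := by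
  have hm : m ≤ 2 * m := by rw [two_mul]; exact le_self_add
  refine le_trans ?_ (add_le_add le_rfl hm)
  rcases le_total p m with hpm | hpm
  · exact hpm.trans le_add_self
  obtain ⟨d, rfl⟩ := exists_add_of_le hpm
  rw [add_comm m d]
  gcongr
  have hmp : m * (m + d) ≠ ⊤ := ENNReal.mul_ne_top
    (ne_top_of_le_ne_top hp1 le_self_add) hp1
  have h2 : d * (m + d) ≤ l := by
    rw [add_mul, add_comm l] at h
    exact (ENNReal.add_le_add_iff_left hmp).1 h
  have h3 : d ^ (2 : ℝ) ≤ l := by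
    refine le_trans ?_ h2
    rw [ENNReal.rpow_two, sq]
    gcongr
    exact le_add_self
  calc d = (d ^ (2 : ℝ)) ^ ((1 : ℝ) / 2) := by
        rw [← ENNReal.rpow_mul]; norm_num
    _ ≤ _ := by gcongr

theorem decoupling {A B : Type*} (μY : PMF A) (μZ : PMF B) (E : Set (A × B)) :
    (∑' p : A × B, μY p.1 * μZ p.2 * E.indicator (fun _ => (1 : ℝ≥0∞)) p) ≤
      (⨆ (y : A) (y' : A) (_ : y ≠ y'),
          ∑' z : B, μZ z *
            ({z : B | (y, z) ∈ E ∧ (y', z) ∈ E}).indicator (fun _ => (1 : ℝ≥0∞)) z)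
        ^ ((1 : ℝ) / 2)
      + 2 * ⨆ y : A, μY y := by
  classical
  set e : A → B → ℝ≥0∞ := fun y z => E.indicator (fun _ => (1 : ℝ≥0∞)) (y, z) with he
  have hG : ∀ y y', (∑' z : B, μZ z *
            ({z : B | (y, z) ∈ E ∧ (y', z) ∈ E}).indicator (fun _ => (1 : ℝ≥0∞)) z)
            = ∑' z, μZ z * (e y z * e y' z) := by
    intro y y'
    congr 1; ext z; congr 1
    by_cases h1 : (y, z) ∈ E <;> by_cases h2 : (y', z) ∈ E <;> simp [he, h1, h2]
  simp_rw [hG]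
  set m := ⨆ y : A, μY y with hm
  set G : A → A → ℝ≥0∞ := fun y y' => ∑' z, μZ z * (e y z * e y' z) with hGd
  set l := ⨆ (y : A) (y' : A) (_ : y ≠ y'), ∑' z, μZ z * (e y z * e y' z) with hl
  have hle : ∀ y y', y ≠ y' → G y y' ≤ l := fun y y' h =>
    le_iSup_of_le y (le_iSup_of_le y' (le_iSup_of_le h le_rfl))
  set p := ∑' p : A × B, μY p.1 * μZ p.2 * E.indicator (fun _ => (1 : ℝ≥0∞)) p with hp
  have hpY : p = ∑' y, μY y * ∑' z, μZ z * e y z := by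
    rw [hp, ENNReal.tsum_prod']
    simp_rw [← ENNReal.tsum_mul_left, mul_assoc]
    rfl
  have hpZ : p = ∑' z, μZ z * ∑' y, μY y * e y z := by
    rw [hpY]
    simp_rw [← ENNReal.tsum_mul_left]
    rw [ENNReal.tsum_comm]
    congr 1; ext z; congr 1; ext y; ring
  have he1 : ∀ y z, e y z ≤ 1 := fun y z => Set.indicator_le_self' (by simp) _
  have hee : ∀ y z, e y z * e y z = e y z := fun y z => by
    by_cases h1 : (y, z) ∈ E <;> simp [he, h1]
  have hp1 : p ≠ ⊤ := by
    refine ne_top_of_le_ne_top ENNReal.one_ne_top ?_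
    rw [hpY]
    calc _ ≤ ∑' y, μY y * ∑' z, μZ z * 1 := by gcongr; exact he1 _ _
      _ = 1 := by simp [μZ.tsum_coe, μY.tsum_coe]
  apply aux_final p l m hp1
  refine (aux_cs _ _ μZ.tsum_coe p hpZ hp1).trans ?_
  calc _ = ∑' y, μY y * ∑' y', μY y' * G y y' := by
        simp only [hGd]
        simp_rw [← ENNReal.tsum_mul_left, ← ENNReal.tsum_mul_right, ← ENNReal.tsum_mul_left]
        rw [ENNReal.tsum_comm]
        conv_rhs => rw [ENNReal.tsum_comm]
        congr 1; ext y
        rw [ENNReal.tsum_comm]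
        congr 1; ext y'; congr 1; ext z; ring
    _ ≤ ∑' y, μY y * ∑' y', (μY y' * l + if y' = y then μY y * G y y else 0) := by
        gcongr with y y'
        split_ifs with h
        · subst h; exact le_add_self
        · rw [add_zero]; gcongr; exact hle _ _ (Ne.symm h)
    _ = ∑' y, (μY y * l + μY y * (μY y * G y y)) := by
        congr 1; ext y
        rw [ENNReal.tsum_add, tsum_ite_eq, ENNReal.tsum_mul_right, μY.tsum_coe, one_mul, mul_add]
    _ ≤ ∑' y, (μY y * l + m * (μY y * G y y)) := by
        gcongr with y
        exact le_iSup (fun y => μY y) y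
    _ = l + m * p := by
        rw [ENNReal.tsum_add, ENNReal.tsum_mul_right, μY.tsum_coe, one_mul,
          ENNReal.tsum_mul_left, hpY]
        simp only [hGd, hee]
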